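/- arXiv:1108.4564 — 3 statements merged into one kernel-verified Lean document; each statement's English description precedes it below -/
import Mathlib

section
/- Let R be a commutative Noetherian ring and M a weakly Laskerian R-module. Then for each nonnegative integer k, M has a finitely generated submodule N_k such that Supp(M/N_k) ∩ A(R,k) is a finite set. -/
/-!
Call a set `X` of pairs `(q, y)`, with distinct primes `q ∈ A(R, k)` and `y ∈ M`, an associated
family if each `q` is exactly the annihilator of `y` modulo `N_X = ∑ q y`. Associated families are
closed under unions of chains, so by Zorn's lemma there is a maximal one. Its primes lie in
`Ass (M / N_X)`, so if `M` is weakly Laskerian, then `X` is finite and `N_X` is finitely generated.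

By maximality, every prime of `Supp (M / N_X) ∩ A(R, k)` occurs in `X`. Otherwise let `p` be a new
one and choose `x ∈ M` whose annihilator modulo `N_X` lies in `p`. For every `s ∉ p` the element
`s x` has annihilator exactly `p` modulo `N_X + p s x`. By Krull's intersection theorem in
`(M / N_X)_q`, an old pair `(q, y)` survives modulo `N_X + q ^ n x` for some `n`. Distinct primes
in `A(R, k)` are incomparable, so some `s ∉ p` lies in these finitely many `q ^ n`, and `(p, s x)`
extends `X`.
-/

/-- `A(R, k)` is the set of primes `p` of `R` with `dim (R / p) = k`. -/
def dimSet (R : Type*) [CommRing R] (k : ℕ) : Set (PrimeSpectrum R) :=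
  {p | ringKrullDim (R ⧸ p.asIdeal) = k}

section Dimension

variable {R : Type*} [CommRing R]

lemma ringKrullDim_quotient_succ_le_of_lt {p q : Ideal R} [p.IsPrime] (h : p < q) :
    ringKrullDim (R ⧸ q) + 1 ≤ ringKrullDim (R ⧸ p) := by
  obtain ⟨r, hrq, hrp⟩ := SetLike.exists_of_lt h
  refine ringKrullDim_succ_le_of_surjective (Ideal.Quotient.factor h.le)
    (Ideal.Quotient.factor_surjective h.le) (r := Ideal.Quotient.mk p r)
    (mem_nonZeroDivisors_of_ne_zero ?_) ?_
  · rwa [Ne, Ideal.Quotient.eq_zero_iff_mem]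
  · rwa [Ideal.Quotient.factor_mk, Ideal.Quotient.eq_zero_iff_mem]

variable (R) in
lemma isAntichain_dimSet (k : ℕ) : IsAntichain (· ≤ ·) (dimSet R k) := by
  intro p hp q hq hne hle
  have hdim := ringKrullDim_quotient_succ_le_of_lt (lt_of_le_of_ne hle hne : p < q)
  rw [show ringKrullDim (R ⧸ p.asIdeal) = k from hp,
    show ringKrullDim (R ⧸ q.asIdeal) = k from hq] at hdim
  exact (Nat.lt_succ_self k).not_ge (by exact_mod_cast hdim)

end Dimension

lemma exists_notMem_forall_mem_of_isPrime {R ι : Type*} [CommRing R] {p : Ideal R}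
    (hp : p.IsPrime) {X : Set ι} (hX : X.Finite) {I : ι → Ideal R} (h : ∀ i ∈ X, ¬ I i ≤ p) :
    ∃ s ∉ p, ∀ i ∈ X, s ∈ I i := by
  lift X to Finset ι using hX
  by_contra! hcon
  obtain ⟨i, hi, hle⟩ := hp.inf_le'.mp fun s hs ↦ by
    by_contra hsp
    obtain ⟨i, hi, hsi⟩ := hcon s hsp
    exact hsi (Finset.inf_le (f := I) hi hs)
  exact h i hi hle

section Krull

variable {R M : Type*} [CommRing R] [IsNoetherianRing R] [AddCommGroup M] [Module R M]

lemma iInf_pow_smul_eq_bot_of_fg_of_isLocalRing [IsLocalRing R] {I : Ideal R} (hI : I ≠ ⊤)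
    {N : Submodule R M} (hN : N.FG) : ⨅ n : ℕ, I ^ n • N = ⊥ := by
  have : Module.Finite R N := Module.Finite.iff_fg.mpr hN
  calc ⨅ n : ℕ, I ^ n • N
      = ⨅ n : ℕ, (I ^ n • (⊤ : Submodule R N)).map N.subtype := by
        simp only [Submodule.map_smul'', Submodule.map_top, Submodule.range_subtype]
    _ = (⨅ n : ℕ, I ^ n • (⊤ : Submodule R N)).map N.subtype :=
        (Submodule.map_iInf _ N.subtype_injective).symm
    _ = ⊥ := by rw [Ideal.iInf_pow_smul_eq_bot_of_isLocalRing I hI, Submodule.map_bot]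

lemma exists_notMem_smul_eq_zero_of_forall_smul_mem_pow_smul {p : Ideal R} [p.IsPrime]
    {N : Submodule R M} (hN : N.FG) {y : M}
    (h : ∀ n : ℕ, ∃ t ∉ p, t • y ∈ p ^ n • N) : ∃ t ∉ p, t • y = 0 := by
  let Rp := Localization.AtPrime p
  let f := LocalizedModule.mkLinearMap p.primeCompl M
  let Np : Submodule Rp (LocalizedModule p.primeCompl M) := N.localized' Rp p.primeCompl f
  have hNp : Np.FG := by
    obtain ⟨s, rfl⟩ := hN
    classical exact ⟨s.image f, by simp [Np, Submodule.localized'_span]⟩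
  have hy (n : ℕ) : f y ∈ IsLocalRing.maximalIdeal Rp ^ n • Np := by
    obtain ⟨t, ht, hty⟩ := h n
    rw [← Localization.AtPrime.map_eq_maximalIdeal, ← Ideal.map_pow,
      ← Ideal.localized'_eq_map Rp p.primeCompl, ← Submodule.localized'_smul]
    exact ⟨t • y, hty, ⟨t, ht⟩, IsLocalizedModule.mk'_cancel f y ⟨t, ht⟩⟩
  have hfy : f y = 0 := by
    rw [← Submodule.mem_bot Rp, ← iInf_pow_smul_eq_bot_of_fg_of_isLocalRing
      (IsLocalRing.maximalIdeal.isMaximal Rp).ne_top hNp]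
    exact (Submodule.mem_iInf _).mpr hy
  obtain ⟨t, ht⟩ := (IsLocalizedModule.eq_zero_iff p.primeCompl f).mp hfy
  exact ⟨t, t.2, ht⟩

lemma exists_colon_sup_pow_smul_le {p : Ideal R} [p.IsPrime] {N F : Submodule R M} (hF : F.FG)
    {y : M} (h : N.colon {y} ≤ p) : ∃ n : ℕ, (N ⊔ p ^ n • F).colon {y} ≤ p := by
  by_contra! hcon
  have hpow (n : ℕ) : ∃ t ∉ p, t • N.mkQ y ∈ p ^ n • F.map N.mkQ := by
    obtain ⟨t, hty, ht⟩ := SetLike.not_le_iff_exists.mp (hcon n)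
    refine ⟨t, ht, ?_⟩
    rw [← map_smul, ← Submodule.map_smul'', ← Submodule.mem_comap, Submodule.comap_map_mkQ]
    exact Submodule.mem_colon_singleton.mp hty
  obtain ⟨t, ht, hty⟩ :=
    exists_notMem_smul_eq_zero_of_forall_smul_mem_pow_smul (hF.map N.mkQ) hpow
  rw [← map_smul, Submodule.mkQ_apply, Submodule.Quotient.mk_eq_zero] at hty
  exact ht (h (Submodule.mem_colon_singleton.mpr hty))

end Krull

section Colon

variable {R M : Type*} [CommRing R] [AddCommGroup M] [Module R M] {N : Submodule R M}

variable (N) in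
lemma bot_colon_singleton_mkQ (x : M) :
    (⊥ : Submodule R (M ⧸ N)).colon {N.mkQ x} = N.colon {x} := by
  ext r
  rw [Submodule.mem_colon_singleton, Submodule.mem_colon_singleton, Submodule.mem_bot, ← map_smul,
    Submodule.mkQ_apply, Submodule.Quotient.mk_eq_zero]

lemma mem_associatedPrimes_quotient_of_colon_eq {p : Ideal R} (hp : p.IsPrime) {x : M}
    (h : N.colon {x} = p) : p ∈ associatedPrimes R (M ⧸ N) :=
  ⟨hp, N.mkQ x, by rw [bot_colon_singleton_mkQ, h, hp.radical]⟩

lemma mem_support_quotient_iff_exists_colon_le {p : PrimeSpectrum R} :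
    p ∈ Module.support R (M ⧸ N) ↔ ∃ x, N.colon {x} ≤ p.asIdeal := by
  simp_rw [Module.mem_support_iff_exists_annihilator, ← Submodule.bot_colon',
    N.mkQ_surjective.exists, bot_colon_singleton_mkQ]

lemma colon_sup_smul_span_singleton_le {p : Ideal R} (hp : p.IsPrime) {x : M}
    (hx : N.colon {x} ≤ p) {s : R} (hs : s ∉ p) :
    (N ⊔ p • Submodule.span R {s • x}).colon {s • x} ≤ p := by
  intro a ha
  obtain ⟨u, hu, _, hv, hsum⟩ := Submodule.mem_sup.mp (Submodule.mem_colon_singleton.mp ha)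
  obtain ⟨b, hb, rfl⟩ := Submodule.mem_smul_span_singleton.mp hv
  have hab : (a - b) * s ∈ N.colon {x} := by
    rw [Submodule.mem_colon_singleton, mul_smul, sub_smul, ← hsum, add_sub_cancel_right]
    exact hu
  exact (p.sub_mem_iff_left hb).mp ((hp.mem_or_mem (hx hab)).resolve_right hs)

end Colon

section AssociatedFamily

variable {R M : Type*} [CommRing R] [AddCommGroup M] [Module R M]

/-- The submodule `∑ q • y` over the pairs `(q, y)` in `X`: the smallest submodule of `M` modulo
which every `q` annihilates the corresponding `y`. -/
def primeMultiples (X : Set (PrimeSpectrum R × M)) : Submodule R M :=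
  ⨆ w ∈ X, w.1.asIdeal • Submodule.span R {w.2}

/-- A family of pairs `(q, y)` with distinct primes `q ∈ A` such that `q` is the annihilator of `y`
modulo `primeMultiples X`, so that `q` is associated to `M ⧸ primeMultiples X`. Only one inclusion
is a condition; the other is `le_colon_primeMultiples`. -/
structure IsAssociatedFamily (A : Set (PrimeSpectrum R)) (X : Set (PrimeSpectrum R × M)) :
    Prop where
  mapsTo : X.MapsTo Prod.fst A
  injOn : X.InjOn Prod.fst
  colon_le : ∀ w ∈ X, (primeMultiples X).colon {w.2} ≤ w.1.asIdeal

lemma primeMultiples_insert (w : PrimeSpectrum R × M) (X : Set (PrimeSpectrum R × M)) :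
    primeMultiples (insert w X) = primeMultiples X ⊔ w.1.asIdeal • Submodule.span R {w.2} :=
  iSup_insert.trans (sup_comm _ _)

lemma primeMultiples_mono : Monotone (primeMultiples (R := R) (M := M)) :=
  fun _ _ h ↦ biSup_mono h

lemma primeMultiples_fg [IsNoetherianRing R] {X : Set (PrimeSpectrum R × M)} (hX : X.Finite) :
    (primeMultiples X).FG := by
  lift X to Finset (PrimeSpectrum R × M) using hX
  exact Submodule.fg_biSup X _ fun w _ ↦
    Submodule.FG.smul (IsNoetherian.noetherian w.1.asIdeal) (Submodule.fg_span_singleton w.2)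

lemma le_colon_primeMultiples {X : Set (PrimeSpectrum R × M)} {w : PrimeSpectrum R × M}
    (hw : w ∈ X) : w.1.asIdeal ≤ (primeMultiples X).colon {w.2} := fun _ ha ↦
  Submodule.mem_colon_singleton.mpr <| le_biSup
    (fun w : PrimeSpectrum R × M ↦ w.1.asIdeal • Submodule.span R {w.2}) hw <|
      Submodule.smul_mem_smul ha (Submodule.mem_span_singleton_self w.2)

lemma mem_primeMultiples_sUnion {c : Set (Set (PrimeSpectrum R × M))} (hne : c.Nonempty)
    (hc : DirectedOn (· ⊆ ·) c) {z : M} :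
    z ∈ primeMultiples (⋃₀ c) ↔ ∃ X ∈ c, z ∈ primeMultiples X := by
  have hsSup : primeMultiples (⋃₀ c) = sSup (primeMultiples '' c) := by
    rw [sSup_image, primeMultiples, iSup_sUnion]
    rfl
  rw [hsSup, Submodule.mem_sSup_of_directed (hne.image _)
    (directedOn_image.mpr (hc.mono fun _ _ h ↦ primeMultiples_mono h))]
  exact Set.exists_mem_image

namespace IsAssociatedFamily

variable {A : Set (PrimeSpectrum R)} {X : Set (PrimeSpectrum R × M)}

lemma sUnion {c : Set (Set (PrimeSpectrum R × M))} (hc : IsChain (· ⊆ ·) c)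
    (h : ∀ X ∈ c, IsAssociatedFamily A X) : IsAssociatedFamily A (⋃₀ c) where
  mapsTo := Set.mapsTo_sUnion.mpr fun X hX ↦ (h X hX).mapsTo
  injOn := Set.injOn_iff_pairwise_ne.mpr <|
    hc.pairwise_sUnion.mpr fun X hX ↦ (h X hX).injOn.pairwise_ne
  colon_le := by
    rintro w ⟨X, hX, hw⟩ a ha
    obtain ⟨Y, hY, ha⟩ := (mem_primeMultiples_sUnion ⟨X, hX⟩ hc.directedOn).mp
      (Submodule.mem_colon_singleton.mp ha)
    obtain ⟨Z, hZ, hXZ, hYZ⟩ := hc.directedOn X hX Y hY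
    exact (h Z hZ).colon_le w (hXZ hw)
      (Submodule.mem_colon_singleton.mpr (primeMultiples_mono hYZ ha))

variable (M) in
lemma exists_maximal (A : Set (PrimeSpectrum R)) :
    ∃ X : Set (PrimeSpectrum R × M), Maximal (IsAssociatedFamily A) X :=
  zorn_subset {X | IsAssociatedFamily A X} fun c hc hchain ↦
    ⟨⋃₀ c, sUnion hchain hc, fun _ ↦ Set.subset_sUnion_of_mem⟩

lemma image_fst_subset_associatedPrimes (hX : IsAssociatedFamily A X) :
    Prod.fst '' X ⊆
      PrimeSpectrum.asIdeal ⁻¹' associatedPrimes R (M ⧸ primeMultiples X) ∩ A := by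
  rintro _ ⟨w, hw, rfl⟩
  exact ⟨mem_associatedPrimes_quotient_of_colon_eq w.1.isPrime
    ((hX.colon_le w hw).antisymm (le_colon_primeMultiples hw)), hX.mapsTo hw⟩

lemma exists_insert [IsNoetherianRing R] (hA : IsAntichain (· ≤ ·) A)
    (hX : IsAssociatedFamily A X) (hfin : X.Finite) {p : PrimeSpectrum R} (hpA : p ∈ A)
    (hp : p ∈ Module.support R (M ⧸ primeMultiples X)) (hpX : p ∉ Prod.fst '' X) :
    ∃ y, IsAssociatedFamily A (insert (p, y) X) := by
  obtain ⟨x, hx⟩ := mem_support_quotient_iff_exists_colon_le.mp hp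
  choose! n hn using fun w hw ↦
    exists_colon_sup_pow_smul_le (Submodule.fg_span_singleton x) (hX.colon_le w hw)
  obtain ⟨s, hsp, hs⟩ : ∃ s ∉ p.asIdeal, ∀ w ∈ X, s ∈ w.1.asIdeal ^ n w :=
    exists_notMem_forall_mem_of_isPrime p.isPrime hfin fun w hw hle ↦
      hpX ⟨w, hw, hA.eq (hX.mapsTo hw) hpA (p.isPrime.le_of_pow_le hle)⟩
  have hle (w) (hw : w ∈ X) : p.asIdeal • Submodule.span R {s • x} ≤
      w.1.asIdeal ^ n w • Submodule.span R {x} :=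
    Submodule.smul_le_right.trans <| (Submodule.span_singleton_le_iff_mem _ _).mpr <|
      Submodule.smul_mem_smul (hs w hw) (Submodule.mem_span_singleton_self x)
  refine ⟨s • x, ?_, (Set.injOn_insert fun h ↦ hpX ⟨_, h, rfl⟩).mpr ⟨hX.injOn, hpX⟩, ?_⟩
  · exact Set.forall_mem_insert.mpr ⟨hpA, fun _ hw ↦ hX.mapsTo hw⟩
  · rw [primeMultiples_insert]
    rintro w (rfl | hw)
    · exact colon_sup_smul_span_singleton_le p.isPrime hx hsp
    · exact (Submodule.colon_mono (sup_le_sup_left (hle w hw) _) subset_rfl).trans (hn w hw)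

lemma support_inter_subset_image_fst [IsNoetherianRing R] (hA : IsAntichain (· ≤ ·) A)
    (hX : Maximal (IsAssociatedFamily A) X) (hfin : X.Finite) :
    Module.support R (M ⧸ primeMultiples X) ∩ A ⊆ Prod.fst '' X := by
  rintro p ⟨hp, hpA⟩
  by_contra hpX
  obtain ⟨y, hy⟩ := hX.prop.exists_insert hA hfin hpA hp hpX
  exact hpX ⟨(p, y), hX.le_of_ge hy (Set.subset_insert _ _) (Set.mem_insert _ _), rfl⟩

end IsAssociatedFamily

end AssociatedFamily

theorem weaklyLaskerian_exists_fg_submodule_general {R : Type*} [CommRing R] [IsNoetherianRing R]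
    {M : Type*} [AddCommGroup M] [Module R M] {A : Set (PrimeSpectrum R)}
    (hA : IsAntichain (· ≤ ·) A)
    (hass : ∀ N : Submodule R M,
      (PrimeSpectrum.asIdeal ⁻¹' associatedPrimes R (M ⧸ N) ∩ A).Finite) :
    ∃ N : Submodule R M, N.FG ∧ (Module.support R (M ⧸ N) ∩ A).Finite ∧
      Module.support R (M ⧸ N) ∩ A ⊆ PrimeSpectrum.asIdeal ⁻¹' associatedPrimes R (M ⧸ N) := by
  obtain ⟨X, hX⟩ := IsAssociatedFamily.exists_maximal M A
  have himage : (Prod.fst '' X).Finite := (hass _).subset hX.prop.image_fst_subset_associatedPrimes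
  have hfin : X.Finite := himage.of_finite_image hX.prop.injOn
  have hsupp := IsAssociatedFamily.support_inter_subset_image_fst hA hX hfin
  exact ⟨primeMultiples X, primeMultiples_fg hfin, himage.subset hsupp,
    fun p hp ↦ (hX.prop.image_fst_subset_associatedPrimes (hsupp hp)).1⟩

/-- If `M` is a weakly Laskerian module over a Noetherian ring `R`, then for each `k ∈ ℕ`
there is a finitely generated submodule `N` of `M` with `Supp (M / N) ∩ A(R, k)` finite. -/
theorem weaklyLaskerian_exists_fg_submodule {R : Type*} [CommRing R] [IsNoetherianRing R]
    {M : Type*} [AddCommGroup M] [Module R M]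
    (hwl : ∀ N : Submodule R M, (associatedPrimes R (M ⧸ N)).Finite) (k : ℕ) :
    ∃ N : Submodule R M, N.FG ∧ (Module.support R (M ⧸ N) ∩ dimSet R k).Finite :=
  have ⟨N, hfg, hfin, _⟩ := weaklyLaskerian_exists_fg_submodule_general (isAntichain_dimSet R k)
    fun N ↦ ((hwl N).preimage fun _ _ _ _ ↦ PrimeSpectrum.ext).inter_of_left _
  ⟨N, hfg, hfin⟩
end

section
/- Let R be a commutative Noetherian ring and M an R-module. Suppose N_0 and N_1 are finitely generated submodules of M such that Supp(M/N_0) ∩ A(R,0) and Supp(M/N_1) ∩ A(R,1) are finite sets. Then, setting N := N_0 + N_1, one has Supp(M/N) ⊆ (Supp(M/N_0) ∩ A(R,0)) ∪ (Supp(M/N_1) ∩ A(R,1)); in particular, Supp(M/N) is a finite set. -/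
/-!
In a Noetherian ring, an interval of primes `p < r < m` is either empty or infinite: by Krull's
principal ideal theorem the primes in it cover `m`, so finitely many of them would violate prime
avoidance. Hence, if a specialization-stable set of primes contained a `p` with `dim (R / p) ≥ 2`,
a maximal such `p` would lie under infinitely many primes with one-dimensional quotient.
`Supp (M / N)` is specialization-stable and lies in both `Supp (M / N₀)` and `Supp (M / N₁)`.
-/

open Set Order

lemma coheight_le_one_of_finite_inter {α : Type*} [Preorder α] [WellFoundedGT α]
    (hα : ∀ a b : α, (Ioo a b).Nonempty → (Ioo a b).Infinite) {s : Set α} (hs : IsUpperSet s)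
    (hfin : (s ∩ {a | coheight a = 1}).Finite) {a : α} (ha : a ∈ s) : coheight a ≤ 1 := by
  induction a using WellFoundedGT.induction with
  | ind a ih =>
    by_contra hcoheight
    obtain ⟨b, hab, hb⟩ : ∃ b > a, ¬ IsMax b := by
      contrapose! hcoheight
      exact coheight_le_coe_iff (n := 1).mpr fun b hab ↦ by simpa using hcoheight b hab
    obtain ⟨c, hbc⟩ := not_isMax_iff.mp hb
    refine hα a c ⟨b, hab, hbc⟩ (hfin.subset fun r ⟨har, hrc⟩ ↦ ?_)
    have hr : r ∈ s := hs har.le ha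
    have hr_ne_zero : coheight r ≠ 0 := coheight_ne_zero.mpr hrc.not_isMax
    exact ⟨hr, (ih r har hr).antisymm (one_le_iff_ne_zero.mpr hr_ne_zero)⟩

section PrimeSpectrum

variable {R : Type*} [CommRing R]

lemma mem_dimSet_iff_coheight_eq {p : PrimeSpectrum R} {k : ℕ} :
    p ∈ dimSet R k ↔ coheight p = k := by
  have hdim : ringKrullDim (R ⧸ p.asIdeal) = coheight p :=
    (ringKrullDim_quotient _).trans (coheight_eq_krullDim_Ici p).symm
  rw [dimSet, mem_ofPred_eq, hdim]
  norm_cast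

variable [IsNoetherianRing R]

lemma exists_mem_Ioo_and_mem_asIdeal {p m : PrimeSpectrum R} (hpm : (Ioo p m).Nonempty) {x : R}
    (hx : x ∈ m.asIdeal) : ∃ r ∈ Ioo p m, x ∈ r.asIdeal := by
  obtain ⟨q, hpq, hqm⟩ := hpm
  by_cases hxp : x ∈ p.asIdeal
  · exact ⟨q, ⟨hpq, hqm⟩, hpq.le hxp⟩
  obtain ⟨r, hr, hrm⟩ : ∃ r ∈ (Ideal.span (insert x (p.asIdeal : Set R))).minimalPrimes,
      r ≤ m.asIdeal :=
    Ideal.exists_minimalPrimes_le (Ideal.span_le.mpr (insert_subset hx (hpq.trans hqm).le))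
  obtain ⟨hxr, hpr⟩ : x ∈ r ∧ (p.asIdeal : Set R) ⊆ r :=
    insert_subset_iff.mp (Ideal.span_le.mp hr.le)
  have hrm_ne : r ≠ m.asIdeal := by
    rintro rfl
    have hq : q.asIdeal ∈ (Ideal.span (p.asIdeal : Set R)).minimalPrimes :=
      Ideal.mem_minimalPrimes_span_of_mem_minimalPrimes_span_insert hqm x _ hr _ hpq.le
        fun y hy ↦ Ideal.le_radical (Ideal.subset_span (mem_insert_of_mem _ hy))
    rw [Ideal.span_eq] at hq
    exact hpq.not_ge (hq.2 ⟨p.isPrime, le_rfl⟩ hpq.le)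
  have hpr_lt : p.asIdeal < r := lt_of_le_of_ne hpr fun h ↦ hxp (h ▸ hxr)
  exact ⟨⟨r, hr.isPrime⟩, ⟨hpr_lt, hrm.lt_of_ne hrm_ne⟩, hxr⟩

lemma primeSpectrum_Ioo_infinite_of_nonempty (p m : PrimeSpectrum R) (hpm : (Ioo p m).Nonempty) :
    (Ioo p m).Infinite := by
  intro hfin
  have hcover : (m.asIdeal : Set R) ⊆ ⋃ r ∈ Ioo p m, (r.asIdeal : Set R) := fun x hx ↦
    let ⟨_, hr, hxr⟩ := exists_mem_Ioo_and_mem_asIdeal hpm hx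
    mem_biUnion hr hxr
  obtain ⟨r, hr, hmr⟩ :=
    (Ideal.subset_union_prime_finite hfin p p fun r _ _ _ ↦ r.isPrime).mp hcover
  exact hr.2.not_ge hmr

lemma subset_dimSet_zero_union_dimSet_one {s : Set (PrimeSpectrum R)} (hs : IsUpperSet s)
    (hfin : (s ∩ dimSet R 1).Finite) : s ⊆ dimSet R 0 ∪ dimSet R 1 := by
  have : WellFoundedGT (PrimeSpectrum R) :=
    ⟨InvImage.wf PrimeSpectrum.asIdeal wellFounded_gt⟩
  have hdim : dimSet R 1 = {p | coheight p = 1} := ext fun p ↦ mem_dimSet_iff_coheight_eq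
  intro p hp
  have hp_le : coheight p ≤ 1 := coheight_le_one_of_finite_inter
    primeSpectrum_Ioo_infinite_of_nonempty hs (hdim ▸ hfin) hp
  exact (le_one_iff.mp hp_le).imp mem_dimSet_iff_coheight_eq.mpr mem_dimSet_iff_coheight_eq.mpr

end PrimeSpectrum

section Support

variable {R : Type*} [CommRing R] {M : Type*} [AddCommGroup M] [Module R M]

lemma isUpperSet_support : IsUpperSet (Module.support R M) :=
  fun _ _ hpq hp ↦ Module.mem_support_mono hpq hp

lemma support_quotient_anti {N N' : Submodule R M} (h : N ≤ N') :
    Module.support R (M ⧸ N') ⊆ Module.support R (M ⧸ N) :=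
  Module.support_subset_of_surjective _ (Submodule.factor_surjective h)

end Support

theorem support_quotient_sup_subset_general {R : Type*} [CommRing R] [IsNoetherianRing R]
    {M : Type*} [AddCommGroup M] [Module R M] (N₀ N₁ : Submodule R M)
    (h₀ : (Module.support R (M ⧸ N₀) ∩ dimSet R 0).Finite)
    (h₁ : (Module.support R (M ⧸ N₁) ∩ dimSet R 1).Finite) :
    Module.support R (M ⧸ (N₀ ⊔ N₁)) ⊆
        (Module.support R (M ⧸ N₀) ∩ dimSet R 0) ∪
          (Module.support R (M ⧸ N₁) ∩ dimSet R 1) ∧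
      (Module.support R (M ⧸ (N₀ ⊔ N₁))).Finite := by
  have hsub₀ := support_quotient_anti (le_sup_left : N₀ ≤ N₀ ⊔ N₁)
  have hsub₁ := support_quotient_anti (le_sup_right : N₁ ≤ N₀ ⊔ N₁)
  have hdim := subset_dimSet_zero_union_dimSet_one isUpperSet_support
    (h₁.subset (inter_subset_inter_left _ hsub₁))
  have hsub : Module.support R (M ⧸ (N₀ ⊔ N₁)) ⊆
      (Module.support R (M ⧸ N₀) ∩ dimSet R 0) ∪ (Module.support R (M ⧸ N₁) ∩ dimSet R 1) :=
    fun p hp ↦ (hdim hp).imp (And.intro (hsub₀ hp)) (And.intro (hsub₁ hp))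
  exact ⟨hsub, (h₀.union h₁).subset hsub⟩

/-- If `N₀` and `N₁` are finitely generated submodules of `M` with
`Supp (M / N₀) ∩ A(R, 0)` and `Supp (M / N₁) ∩ A(R, 1)` finite, then for `N = N₀ + N₁`
we have `Supp (M / N) ⊆ (Supp (M / N₀) ∩ A(R, 0)) ∪ (Supp (M / N₁) ∩ A(R, 1))`;
in particular `Supp (M / N)` is finite. -/
theorem support_quotient_sup_subset {R : Type*} [CommRing R] [IsNoetherianRing R]
    {M : Type*} [AddCommGroup M] [Module R M]
    (N₀ N₁ : Submodule R M) (hfg₀ : N₀.FG) (hfg₁ : N₁.FG)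
    (h₀ : (Module.support R (M ⧸ N₀) ∩ dimSet R 0).Finite)
    (h₁ : (Module.support R (M ⧸ N₁) ∩ dimSet R 1).Finite) :
    Module.support R (M ⧸ (N₀ ⊔ N₁)) ⊆
        (Module.support R (M ⧸ N₀) ∩ dimSet R 0) ∪
          (Module.support R (M ⧸ N₁) ∩ dimSet R 1) ∧
      (Module.support R (M ⧸ (N₀ ⊔ N₁))).Finite :=
  support_quotient_sup_subset_general N₀ N₁ h₀ h₁
end

section
/- Let R be a commutative Noetherian ring, M an R-module, and N a finitely generated submodule of M such that Supp_R(M/N) is a finite set. Then for every submodule L of M, the set Ass_R(M/L) is finite; that is, M is weakly Laskerian. -/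
/-!
Weakly Laskerian modules are closed under extensions: for `N, L ≤ M`, let `K` be the image of `N`
in `M / L`; then `Ass (M / L) ⊆ Ass K ∪ Ass ((M / L) / K)`, where `K` is a quotient of `N` and
`(M / L) / K` is a quotient of `M / N`. It remains to see that finitely generated modules over a
Noetherian ring and modules of finite support are weakly Laskerian; the latter holds because
associated primes lie in the support, which can only shrink under quotients.
-/

theorem associatedPrimes_subset_image_support (R M : Type*) [CommRing R] [AddCommGroup M]
    [Module R M] : associatedPrimes R M ⊆ PrimeSpectrum.asIdeal '' Module.support R M := by
  rintro p ⟨hp, x, hx⟩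
  have hann : (Submodule.span R {x}).annihilator ≤ p := by
    rw [hx, ← Submodule.bot_colon']
    exact Ideal.le_radical
  exact ⟨⟨p, hp⟩, Module.mem_support_iff_exists_annihilator.mpr ⟨x, hann⟩, rfl⟩

/-- A module `M` is weakly Laskerian if every quotient of `M` has finitely many associated primes.
Associated primes are Mathlib's, that is, radicals of annihilators of elements; over a Noetherian
ring these are the prime annihilators of elements. -/
def IsWeaklyLaskerian (R M : Type*) [CommRing R] [AddCommGroup M] [Module R M] : Prop :=
  ∀ L : Submodule R M, (associatedPrimes R (M ⧸ L)).Finite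

namespace IsWeaklyLaskerian

variable {R M : Type*} [CommRing R] [AddCommGroup M] [Module R M]

theorem finite_associatedPrimes_of_surjective {Q : Type*} [AddCommGroup Q] [Module R Q]
    (hM : IsWeaklyLaskerian R M) (f : M →ₗ[R] Q) (hf : Function.Surjective f) :
    (associatedPrimes R Q).Finite :=
  LinearEquiv.AssociatedPrimes.eq (f.quotKerEquivOfSurjective hf) ▸ hM (LinearMap.ker f)

theorem of_moduleFinite [IsNoetherianRing R] [Module.Finite R M] : IsWeaklyLaskerian R M :=
  fun L ↦ associatedPrimes.finite R (M ⧸ L)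

theorem of_finite_support (h : (Module.support R M).Finite) : IsWeaklyLaskerian R M := fun L ↦
  have hL : (Module.support R (M ⧸ L)).Finite :=
    h.subset (Module.support_subset_of_surjective L.mkQ L.mkQ_surjective)
  (hL.image _).subset (associatedPrimes_subset_image_support R (M ⧸ L))

theorem of_submodule_of_quotient (N : Submodule R M) (hN : IsWeaklyLaskerian R N)
    (hMN : IsWeaklyLaskerian R (M ⧸ N)) : IsWeaklyLaskerian R M := by
  intro L
  let K : Submodule R (M ⧸ L) := N.map L.mkQ
  have hK : (associatedPrimes R K).Finite :=
    hN.finite_associatedPrimes_of_surjective _ (L.mkQ.submoduleMap_surjective N)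
  have hsurj : Function.Surjective (N.mapQ K L.mkQ (Submodule.le_comap_map L.mkQ N)) := by
    rw [← LinearMap.range_eq_top, Submodule.range_mapQ, L.range_mkQ, Submodule.map_top,
      K.range_mkQ]
  have hquot : (associatedPrimes R ((M ⧸ L) ⧸ K)).Finite :=
    hMN.finite_associatedPrimes_of_surjective _ hsurj
  exact (hK.union hquot).subset
    (associatedPrimes.subset_union_of_exact K.injective_subtype (LinearMap.exact_subtype_mkQ K))

end IsWeaklyLaskerian

/-- If `N` is a finitely generated submodule of `M` over a Noetherian ring `R` such that
`Supp (M / N)` is finite, then `Ass (M / L)` is finite for every submodule `L` of `M`;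
that is, `M` is weakly Laskerian. -/
theorem weaklyLaskerian_of_fsf {R : Type*} [CommRing R] [IsNoetherianRing R]
    {M : Type*} [AddCommGroup M] [Module R M]
    (N : Submodule R M) (hfg : N.FG) (hfin : (Module.support R (M ⧸ N)).Finite) :
    ∀ L : Submodule R M, (associatedPrimes R (M ⧸ L)).Finite := by
  have : Module.Finite R N := Module.Finite.iff_fg.mpr hfg
  exact IsWeaklyLaskerian.of_submodule_of_quotient N IsWeaklyLaskerian.of_moduleFinite
    (IsWeaklyLaskerian.of_finite_support hfin)
end
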